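/- Let α ∈ Δ'. If C is a minimal set for σ contained in the symbolic β-shift B(I(α)) (i.e. C is a nonempty compact shift-invariant subset of B(I(α)) in which every point has dense forward orbit) and DF_MZ(C) ∩ DF_MZ(C_α) ≠ ∅, then C = C_α. -/

import Mathlib

open Filter Topology MeasureTheory

/-- The sequence space `Σ⁺ = {0,1,2}^ℕ` (with the product topology). -/
abbrev Seq3 := ℕ → Fin 3

/-- The shift map `σ`. -/
def shift (s : Seq3) : Seq3 := fun n => s (n + 1)

/-- The observable `κ(s) = e_{s₀}`. -/
noncomputable def kappa (s : Seq3) : Fin 3 → ℝ := fun i => if i = s 0 then 1 else 0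

/-- The cocycle `κ_σ(s,r) = Σ_{i<r} κ(σⁱ s)`. -/
noncomputable def birk (s : Seq3) (r : ℕ) : Fin 3 → ℝ :=
  ∑ i ∈ Finset.range r, kappa (shift^[i] s)

/-- The Birkhoff digit frequency of `s` exists and equals `v`. -/
def hasFreq (s : Seq3) (v : Fin 3 → ℝ) : Prop :=
  Tendsto (fun r : ℕ => (r : ℝ)⁻¹ • birk s r) atTop (nhds v)

/-- The lexicographic order on `Σ⁺`. -/
def lexLe (s t : Seq3) : Prop :=
  s = t ∨ ∃ n, (∀ i, i < n → s i = t i) ∧ s n < t n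

/-- The set `Max` of maximal sequences. -/
def MaxSet : Set Seq3 := {w | w 0 = 2 ∧ ∀ r : ℕ, lexLe (shift^[r] w) w}

/-- The symbolic β-shift `B(w)`. -/
def BetaShift (w : Seq3) : Set Seq3 := {s | ∀ r : ℕ, lexLe (shift^[r] s) w}

/-- The digit frequency set `DF(w)`. -/
def DF (w : Seq3) : Set (Fin 3 → ℝ) := {v | ∃ s ∈ BetaShift w, hasFreq s v}

/-- The Misiurewicz–Ziemian digit frequency set `DF_MZ(X)` of a subset `X ⊆ Σ⁺`. -/
def DFMZ (X : Set Seq3) : Set (Fin 3 → ℝ) :=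
  {v | ∃ (s : ℕ → Seq3) (r : ℕ → ℕ), (∀ i, s i ∈ X) ∧ Tendsto r atTop atTop ∧
    Tendsto (fun i => (r i : ℝ)⁻¹ • birk (s i) (r i)) atTop (nhds v)}

/-- The standard 2-simplex `Δ ⊆ ℝ³`. -/
def Delta : Set (Fin 3 → ℝ) := {α | (∀ i, 0 ≤ α i) ∧ α 0 + α 1 + α 2 = 1}

/-- `Δ' = {α ∈ Δ : α₂ > 0}`. -/
def Delta' : Set (Fin 3 → ℝ) := {α | α ∈ Delta ∧ 0 < α 2}

/-- `I` is the infimax sequence of `α`: the infimum, in the lexicographic order, of the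
(nonempty) set of maximal sequences with digit frequency `α`; it belongs to `Max`. -/
def IsInfimax (α : Fin 3 → ℝ) (I : Seq3) : Prop :=
  {w | w ∈ MaxSet ∧ hasFreq w α}.Nonempty ∧ I ∈ MaxSet ∧
    (∀ w, w ∈ MaxSet ∧ hasFreq w α → lexLe I w) ∧
    (∀ b : Seq3, (∀ w, w ∈ MaxSet ∧ hasFreq w α → lexLe b w) → lexLe b I)

/-- The closure of the forward `σ`-orbit of `s` (e.g. `C_α` is `orbitClosure I(α)`). -/
def orbitClosure (s : Seq3) : Set Seq3 := closure {t | ∃ r : ℕ, shift^[r] s = t}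

/-- A vector in `ℝ³` is rational if all its coordinates are. -/
def IsRat (v : Fin 3 → ℝ) : Prop := ∀ i, ∃ q : ℚ, v i = (q : ℝ)

/-- A minimal set of a continuous map: a nonempty compact invariant set in which every
point has dense forward orbit. -/
def IsMinimalSet {X : Type*} [TopologicalSpace X] (f : X → X) (C : Set X) : Prop :=
  C.Nonempty ∧ IsCompact C ∧ Set.MapsTo f C C ∧
    ∀ x ∈ C, C ⊆ closure {y | ∃ n : ℕ, f^[n] x = y}

/-!
Let `Λₙ` be the substitution `0 ↦ 1, 1 ↦ 20ⁿ⁺¹, 2 ↦ 20ⁿ`, let `n₀, n₁, …` be the itinerary of `α`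
under the continued fraction map `a ↦ Kₙ a`, `n = ⌊a₀ / a₂⌋`, where `Kₙ` is the inverse of the
incidence matrix of `Λₙ`, and let `P = Λ_{n₀} ⋯ Λ_{n_{R-1}}(2ᵏ⁺¹)`. A word all of whose suffixes lie
below `P` can be desubstituted `R` times, up to the order of its letters, surplus letters `0` and a
bounded number of others, into a word without `2ᵏ⁺¹`. On the latter words the functional
`(-k, -k, 1)` is bounded above; hence its pullback `l` is bounded above on the former ones, and
`l ⬝ v ≤ 0` for every frequency vector `v` of an invariant set of sequences below `P`.

If `l ⬝ v > 0` for all `v` whose renormalizations have a positive last coordinate, this forces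
`I(α)` to start with at least `P`; it starts with exactly `P`, as does the maximal sequence of
frequency `α` obtained by substituting a balanced sequence that starts with `2ᵏ⁺¹`. Such `P` are
arbitrarily long. Hence every sequence in `C_α` is made of long blocks
`Λ_{n₀} ⋯ Λ_{n_{r-1}}(a)`, and so the frequencies `v` of `C_α` have positive renormalizations. If
`C` has such a frequency `v`, then `l ⬝ v > 0`, so some point of `C` starts with `P`; as `P` grows,
`I(α) ∈ C`, and minimality gives `C = C_α`.
-/

section Lexicographic

variable {A : Type*} [LinearOrder A] {x y x' y' : List A}

lemma list_cons_le_cons_iff {a b : A} : a :: x ≤ b :: y ↔ a < b ∨ a = b ∧ x ≤ y := by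
  rw [le_iff_lt_or_eq, List.cons_lt_cons_iff, le_iff_lt_or_eq, List.cons_eq_cons]
  tauto

lemma list_append_lt_append_iff (w : List A) : w ++ x < w ++ y ↔ x < y := by
  induction w with
  | nil => rfl
  | cons a w ih => simp [ih]

lemma list_append_le_append_iff (w : List A) : w ++ x ≤ w ++ y ↔ x ≤ y := by
  rw [← not_lt, list_append_lt_append_iff, not_lt]

lemma list_le_of_prefix (h : x <+: y) : x ≤ y :=
  not_lt.1 h.le

lemma list_lt_of_prefix_of_prefix (hx : x <+: x') (hy : y <+: y') (hlen : x.length = y.length)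
    (hlt : x < y) : x' < y' := by
  obtain ⟨-, hlt⟩ | ⟨i, hix, hiy, heq, hi⟩ := List.lt_iff_exists.1 hlt
  · exact absurd hlen hlt.ne
  · refine List.lt_iff_exists.2 (.inr ⟨i, hix.trans_le hx.length_le, hiy.trans_le hy.length_le,
      fun j hj => ?_, ?_⟩)
    · rw [← hx.getElem (hj.trans hix), ← hy.getElem (hj.trans hiy), heq j hj]
    · rwa [← hx.getElem, ← hy.getElem]

variable {o a : A}

lemma replicate_le_of_isBot (ho : IsBot o) {n : ℕ} (h : n ≤ x.length) :
    List.replicate n o ≤ x := by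
  induction n generalizing x with
  | zero => exact list_le_of_prefix List.nil_prefix
  | succ n ih =>
    obtain - | ⟨a, x⟩ := x
    · simp at h
    · rw [List.replicate_succ, list_cons_le_cons_iff]
      exact (ho a).lt_or_eq.imp_right fun ha => ⟨ha, ih (by simpa using h)⟩

lemma append_replicate_le_append_replicate (ho : IsBot o) (n : ℕ) (h : x < y) :
    x ++ List.replicate n o ≤ y ++ List.replicate n o := by
  induction x generalizing y with
  | nil => exact replicate_le_of_isBot ho (by simp)
  | cons a x ih =>
    obtain - | ⟨b, y⟩ := y
    · simp at h
    · rw [List.cons_append, List.cons_append, list_cons_le_cons_iff]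
      exact (List.cons_lt_cons_iff.1 h).imp_right fun h => ⟨h.1, ih h.2⟩

lemma replicate_lt_cons (n : ℕ) (ha : o < a) : List.replicate n o < a :: x := by
  cases n with
  | zero => exact List.nil_lt_cons _ _
  | succ n => exact List.cons_lt_cons_iff.2 (.inl ha)

lemma replicate_append_cons_le (n : ℕ) (ha : o < a) :
    List.replicate n o ++ a :: x ≤ a :: (List.replicate n o ++ x) := by
  cases n with
  | zero => exact le_rfl
  | succ n => exact list_cons_le_cons_iff.2 (.inl ha)

end Lexicographic

section PrefixWord

variable {A : Type*}

/-- The word `s₀ s₁ … s_{N-1}` formed by the first `N` terms of a sequence. -/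
def prefixWord (s : ℕ → A) (N : ℕ) : List A := (List.range N).map s

@[simp]
lemma length_prefixWord (s : ℕ → A) (N : ℕ) : (prefixWord s N).length = N := by
  simp [prefixWord]

@[simp]
lemma getElem_prefixWord (s : ℕ → A) {N i : ℕ} (h : i < (prefixWord s N).length) :
    (prefixWord s N)[i] = s i := by
  simp [prefixWord]

lemma prefixWord_succ (s : ℕ → A) (N : ℕ) : prefixWord s (N + 1) = prefixWord s N ++ [s N] := by
  simp [prefixWord, List.range_succ]

lemma prefixWord_eq_iff {s t : ℕ → A} {N : ℕ} :
    prefixWord s N = prefixWord t N ↔ ∀ i < N, s i = t i := by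
  simp [prefixWord]

lemma prefixWord_prefix (s : ℕ → A) {M N : ℕ} (h : M ≤ N) : prefixWord s M <+: prefixWord s N := by
  obtain ⟨k, rfl⟩ := Nat.exists_eq_add_of_le h
  simp [prefixWord, List.range_add]

lemma eq_prefixWord_of_prefix {s : ℕ → A} {N : ℕ} {w : List A} (h : w <+: prefixWord s N) :
    w = prefixWord s w.length := by
  have hlen : w.length ≤ N := by simpa using h.length_le
  exact (List.prefix_of_prefix_length_le h (prefixWord_prefix s hlen) (by simp)).eq_of_length
    (by simp)

lemma prefixWord_eq_replicate {s : ℕ → A} {a : A} {N : ℕ} (h : ∀ i < N, s i = a) :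
    prefixWord s N = List.replicate N a := by
  rw [List.eq_replicate_iff]
  simpa [prefixWord] using h

lemma prefixWord_lt_prefixWord_iff [LT A] {s t : ℕ → A} {N : ℕ} :
    prefixWord s N < prefixWord t N ↔ ∃ n < N, (∀ i < n, s i = t i) ∧ s n < t n := by
  simp only [List.lt_iff_exists, length_prefixWord, lt_irrefl, and_false, false_or,
    getElem_prefixWord, exists_prop]
  exact exists_congr fun _ => by tauto

lemma prefixWord_lt_of_prefixWord_length_lt [LinearOrder A] {s : ℕ → A} {P : List A}
    (h : prefixWord s P.length < P) (N : ℕ) : prefixWord s N < P := by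
  rcases le_total N P.length with hN | hN
  · exact (list_le_of_prefix (prefixWord_prefix s hN)).trans_lt h
  · exact list_lt_of_prefix_of_prefix (prefixWord_prefix s hN) List.prefix_rfl (by simp) h

/-- The sequence that continues the word `P` by the constant tail `o`. -/
def extendWord (o : A) (P : List A) : ℕ → A := fun i => P.getD i o

@[simp]
lemma prefixWord_extendWord (o : A) (P : List A) : prefixWord (extendWord o P) P.length = P :=
  List.ext_getElem (by simp) fun i _ h => by simp [extendWord, h]

end PrefixWord

section Shift

lemma shift_iterate_apply (m i : ℕ) (s : Seq3) : shift^[m] s i = s (m + i) := by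
  induction m generalizing s with
  | zero => simp
  | succ m ih => rw [Function.iterate_succ_apply, ih, shift, Nat.succ_add_eq_add_succ]; rfl

lemma prefixWord_add (s : Seq3) (m N : ℕ) :
    prefixWord s (m + N) = prefixWord s m ++ prefixWord (shift^[m] s) N := by
  simp [prefixWord, List.range_add, shift_iterate_apply]

lemma prefixWord_succ_eq_cons (s : Seq3) (N : ℕ) :
    prefixWord s (N + 1) = s 0 :: prefixWord (shift s) N := by
  rw [add_comm, prefixWord_add]
  rfl

lemma exists_eq_prefixWord_of_suffix {s : Seq3} {N : ℕ} {w : List (Fin 3)}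
    (h : w <:+ prefixWord s N) : ∃ m M, w = prefixWord (shift^[m] s) M := by
  obtain ⟨t, ht⟩ := h
  have hlen : t.length + w.length = N := by simpa using congrArg List.length ht
  rw [← hlen, prefixWord_add] at ht
  exact ⟨_, _, (List.append_inj ht (by simp)).2⟩

lemma not_lexLe_iff {s t : Seq3} : ¬ lexLe s t ↔ ∃ n, (∀ i < n, t i = s i) ∧ t n < s n := by
  have lexLe_iff_toLex_le : lexLe s t ↔ toLex s ≤ toLex t := by
    rw [le_iff_eq_or_lt, toLex_inj]
    rfl
  rw [lexLe_iff_toLex_le, not_le]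
  rfl

lemma lexLe_iff_forall_prefixWord_le {s t : Seq3} :
    lexLe s t ↔ ∀ N, prefixWord s N ≤ prefixWord t N := by
  rw [← not_iff_not, not_lexLe_iff]
  simp only [not_forall, not_le, prefixWord_lt_prefixWord_iff]
  exact ⟨fun ⟨n, h⟩ => ⟨n + 1, n, n.lt_succ_self, h⟩, fun ⟨_, n, _, h⟩ => ⟨n, h⟩⟩

lemma extendWord_zero_lexLe {P : List (Fin 3)} {w : Seq3} (h : P ≤ prefixWord w P.length) :
    lexLe (extendWord 0 P) w := by
  by_contra hlex
  obtain ⟨n, heq, hlt⟩ := not_lexLe_iff.1 hlex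
  have hn : n < P.length := by
    by_contra hn
    simp [extendWord, List.getElem?_eq_none (not_lt.1 hn)] at hlt
  refine h.not_gt ?_
  conv_rhs => rw [← prefixWord_extendWord 0 P]
  exact prefixWord_lt_prefixWord_iff.2 ⟨n, hn, heq, hlt⟩

end Shift

section Weight

variable {A B : Type*}

/-- The value on a word of the additive functional which takes the value `l a` on the letter `a`. -/
def weight (l : A → ℝ) (w : List A) : ℝ := (w.map l).sum

@[simp]
lemma weight_nil (l : A → ℝ) : weight l [] = 0 := rfl

@[simp]
lemma weight_cons (l : A → ℝ) (a : A) (w : List A) : weight l (a :: w) = l a + weight l w := by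
  simp [weight]

@[simp]
lemma weight_append (l : A → ℝ) (w w' : List A) :
    weight l (w ++ w') = weight l w + weight l w' := by
  simp [weight]

@[simp]
lemma weight_replicate (l : A → ℝ) (n : ℕ) (a : A) : weight l (List.replicate n a) = n * l a := by
  simp [weight]

lemma weight_eq_of_perm (l : A → ℝ) {w w' : List A} (h : w.Perm w') : weight l w = weight l w' :=
  (h.map l).sum_eq

lemma abs_weight_le [Fintype A] (l : A → ℝ) (w : List A) : |weight l w| ≤ w.length * ‖l‖ := by
  induction w with
  | nil => simp
  | cons a w ih =>
    calc |weight l (a :: w)| ≤ |l a| + |weight l w| := by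
          rw [weight_cons]
          exact abs_add_le _ _
      _ ≤ ‖l‖ + w.length * ‖l‖ := add_le_add (norm_le_pi_norm l a) ih
      _ = (a :: w).length * ‖l‖ := by
          rw [List.length_cons, Nat.cast_succ]
          ring

lemma abs_weight_le_of_length_le [Fintype A] (l : A → ℝ) {w : List A} {L : ℕ} (h : w.length ≤ L) :
    |weight l w| ≤ L * ‖l‖ :=
  (abs_weight_le l w).trans (by gcongr)

lemma weight_nonpos {l : A → ℝ} (hl : l ≤ 0) (w : List A) : weight l w ≤ 0 := by
  induction w with
  | nil => exact le_rfl
  | cons a w ih =>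
    rw [weight_cons]
    exact add_nonpos (hl a) ih

lemma weight_flatMap (l : A → ℝ) (f : B → List A) (w : List B) :
    weight l (w.flatMap f) = weight (fun b => weight l (f b)) w := by
  induction w with
  | nil => rfl
  | cons b w ih => rw [List.flatMap_cons, weight_append, ih, weight_cons]

end Weight

section FlatMap

variable {A B : Type*} {f : A → List B}

lemma length_le_length_flatMap (hf : ∀ a, f a ≠ []) (w : List A) :
    w.length ≤ (w.flatMap f).length := by
  induction w with
  | nil => simp
  | cons a w ih =>
    have := List.length_pos_iff.2 (hf a)
    simp only [List.length_cons, List.flatMap_cons, List.length_append]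
    omega

lemma exists_prefix_eq_flatMap_append {L : ℕ} (hL : ∀ a, (f a).length ≤ L) {x : List B}
    {w : List A} (h : x <+: w.flatMap f) :
    ∃ w' s, w' <+: w ∧ s.length ≤ L ∧ x = w'.flatMap f ++ s := by
  induction w generalizing x with
  | nil => exact ⟨[], x, List.nil_prefix, by simp_all, rfl⟩
  | cons a w ih =>
    rw [List.flatMap_cons] at h
    obtain h' | ⟨x', rfl⟩ := List.prefix_or_prefix_of_prefix h (List.prefix_append (f a) _)
    · exact ⟨[], x, List.nil_prefix, h'.length_le.trans (hL a), rfl⟩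
    · obtain ⟨w', s, hw', hs, rfl⟩ := ih ((List.prefix_append_right_inj _).1 h)
      exact ⟨a :: w', s, List.cons_prefix_cons.2 ⟨rfl, hw'⟩, hs, by simp⟩

lemma exists_infix_eq_append_flatMap_append {L : ℕ} (hL : ∀ a, (f a).length ≤ L) {x : List B}
    {w : List A} (h : x <:+: w.flatMap f) :
    ∃ p w' s, w' <:+: w ∧ p.length ≤ L ∧ s.length ≤ L ∧ x = p ++ w'.flatMap f ++ s := by
  induction w generalizing x with
  | nil => exact ⟨[], [], [], List.infix_rfl, by simp_all, by simp, by simp_all⟩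
  | cons a w ih =>
    rw [List.flatMap_cons, List.infix_append_iff] at h
    obtain h | h | ⟨p, x', rfl, hp, hx'⟩ := h
    · exact ⟨x, [], [], List.nil_infix, h.length_le.trans (hL a), by simp, by simp⟩
    · obtain ⟨p, w', s, hw', hp, hs, rfl⟩ := ih h
      exact ⟨p, w', s, hw'.trans (List.suffix_cons a w).isInfix, hp, hs, rfl⟩
    · obtain ⟨w', s, hw', hs, rfl⟩ := exists_prefix_eq_flatMap_append hL hx'
      exact ⟨p, w', s, hw'.isInfix.trans (List.suffix_cons a w).isInfix,
        hp.length_le.trans (hL a), hs, by simp⟩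

end FlatMap

section Substitution

/-- The substitution `Λₙ : 0 ↦ 1, 1 ↦ 20ⁿ⁺¹, 2 ↦ 20ⁿ`, one step of the multidimensional continued
fraction algorithm which generates infimax sequences. -/
def infimaxSubst (n : ℕ) : Fin 3 → List (Fin 3) :=
  ![[1], 2 :: List.replicate (n + 1) 0, 2 :: List.replicate n 0]

@[simp]
lemma infimaxSubst_zero (n : ℕ) : infimaxSubst n 0 = [1] := rfl

@[simp]
lemma infimaxSubst_one (n : ℕ) : infimaxSubst n 1 = 2 :: List.replicate (n + 1) 0 := rfl

@[simp]
lemma infimaxSubst_two (n : ℕ) : infimaxSubst n 2 = 2 :: List.replicate n 0 := rfl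

lemma exists_infimaxSubst_eq_cons (n : ℕ) (a : Fin 3) :
    ∃ c t, 0 < c ∧ infimaxSubst n a = c :: t ∧ 2 ∉ t := by
  fin_cases a
  · exact ⟨1, [], by decide, rfl, by simp⟩
  · exact ⟨2, _, by decide, rfl, by simp [List.mem_replicate]⟩
  · exact ⟨2, _, by decide, rfl, by simp [List.mem_replicate]⟩

lemma infimaxSubst_ne_nil (n : ℕ) (a : Fin 3) : infimaxSubst n a ≠ [] := by
  obtain ⟨c, t, -, h, -⟩ := exists_infimaxSubst_eq_cons n a
  simp [h]

lemma exists_flatMap_infimaxSubst_eq_cons (n : ℕ) {w : List (Fin 3)} (hw : w ≠ []) :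
    ∃ c t, 0 < c ∧ w.flatMap (infimaxSubst n) = c :: t := by
  obtain ⟨a, w, rfl⟩ := List.exists_cons_of_ne_nil hw
  obtain ⟨c, t, hc, h, -⟩ := exists_infimaxSubst_eq_cons n a
  exact ⟨c, t ++ w.flatMap (infimaxSubst n), hc, by simp [h]⟩

lemma infimaxSubst_append_lt (n : ℕ) {b b' : Fin 3} (h : b < b') {w : List (Fin 3)} (hw : w ≠ [])
    (z : List (Fin 3)) :
    infimaxSubst n b ++ z < infimaxSubst n b' ++ w.flatMap (infimaxSubst n) := by
  obtain ⟨c, t, hc, ht⟩ := exists_flatMap_infimaxSubst_eq_cons n hw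
  obtain ⟨rfl, rfl⟩ | ⟨rfl, rfl⟩ | ⟨rfl, rfl⟩ :
      (b = 0 ∧ b' = 1) ∨ (b = 0 ∧ b' = 2) ∨ (b = 1 ∧ b' = 2) := by
    revert h b b'
    decide
  · simp [List.cons_lt_cons_iff]
  · simp [List.cons_lt_cons_iff]
  · rw [infimaxSubst_one, infimaxSubst_two, List.replicate_succ', ht]
    simp [list_append_lt_append_iff, List.cons_lt_cons_iff, hc]

-- `Λₙ` alone reverses `[1] < [2]`, as `Λₙ(2)` is a prefix of `Λₙ(1)`; the letter `a` repairs this.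
lemma flatMap_infimaxSubst_append_lt (n : ℕ) (a : Fin 3) {P d : List (Fin 3)} (h : P ≤ d) :
    P.flatMap (infimaxSubst n) ++ List.replicate n 0 < (d ++ [a]).flatMap (infimaxSubst n) := by
  induction P generalizing d with
  | nil =>
    obtain ⟨c, t, hc, ht⟩ := exists_flatMap_infimaxSubst_eq_cons n (w := d ++ [a]) (by simp)
    rw [ht]
    exact replicate_lt_cons n hc
  | cons b P ih =>
    obtain - | ⟨b', d⟩ := d
    · exact absurd h (not_le.2 (List.nil_lt_cons _ _))
    · rw [List.cons_append, List.flatMap_cons, List.flatMap_cons, List.append_assoc]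
      obtain hlt | ⟨rfl, hle⟩ := list_cons_le_cons_iff.1 h
      · exact infimaxSubst_append_lt n hlt (by simp) _
      · exact (list_append_lt_append_iff _).2 (ih hle)

/-- The composition `Λ_{n₀} ∘ ⋯ ∘ Λ_{n_{R-1}}`. -/
def iterSubst (n : ℕ → ℕ) : ℕ → Fin 3 → List (Fin 3)
  | 0, a => [a]
  | R + 1, a => (infimaxSubst (n R) a).flatMap (iterSubst n R)

lemma flatMap_iterSubst_zero (n : ℕ → ℕ) (w : List (Fin 3)) : w.flatMap (iterSubst n 0) = w :=
  List.flatMap_singleton' w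

lemma flatMap_iterSubst_succ (n : ℕ → ℕ) (R : ℕ) (w : List (Fin 3)) :
    w.flatMap (iterSubst n (R + 1)) =
      (w.flatMap (infimaxSubst (n R))).flatMap (iterSubst n R) := by
  rw [List.flatMap_assoc]
  rfl

lemma iterSubst_ne_nil (n : ℕ → ℕ) (R : ℕ) (a : Fin 3) : iterSubst n R a ≠ [] := by
  induction R generalizing a with
  | zero => simp [iterSubst]
  | succ R ih =>
    obtain ⟨c, t, -, h, -⟩ := exists_infimaxSubst_eq_cons (n R) a
    simp [iterSubst, h, ih]

end Substitution

section Matrix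

open Matrix

/-- The inverse of the incidence matrix of `Λₙ`. -/
def renormMatrix (n : ℕ) : Matrix (Fin 3) (Fin 3) ℝ := !![0, 1, 0; 1, 0, -n; -1, 0, n + 1]

lemma renormMatrix_mulVec (n : ℕ) (v : Fin 3 → ℝ) :
    renormMatrix n *ᵥ v = ![v 1, v 0 - n * v 2, (n + 1) * v 2 - v 0] := by
  ext i
  fin_cases i <;> simp [renormMatrix, mulVec, dotProduct, Fin.sum_univ_three] <;> ring

lemma vecMul_renormMatrix (n : ℕ) (l : Fin 3 → ℝ) :
    l ᵥ* renormMatrix n = ![l 1 - l 2, l 0, (n + 1) * l 2 - n * l 1] := by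
  ext i
  fin_cases i <;> simp [renormMatrix, vecMul, dotProduct, Fin.sum_univ_three] <;> ring

lemma weight_vecMul_renormMatrix (n : ℕ) (l : Fin 3 → ℝ) (w : List (Fin 3)) :
    weight (l ᵥ* renormMatrix n) (w.flatMap (infimaxSubst n)) = weight l w := by
  rw [weight_flatMap, vecMul_renormMatrix]
  congr 1
  ext a
  fin_cases a <;> simp <;> ring

lemma weight_infimaxSubst_vecMul_renormMatrix (n : ℕ) (l : Fin 3 → ℝ) :
    (fun a => weight l (infimaxSubst n a)) ᵥ* renormMatrix n = l := by
  rw [vecMul_renormMatrix]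
  ext i
  fin_cases i <;> simp <;> ring

/-- The product `K_{n_{R-1}} ⋯ K_{n₀}` of renormalization matrices, inverse to the incidence matrix
of `iterSubst n R`. -/
def iterRenorm (n : ℕ → ℕ) : ℕ → Matrix (Fin 3) (Fin 3) ℝ
  | 0 => 1
  | R + 1 => renormMatrix (n R) * iterRenorm n R

lemma weight_vecMul_iterRenorm (n : ℕ → ℕ) (R : ℕ) (l : Fin 3 → ℝ) (w : List (Fin 3)) :
    weight (l ᵥ* iterRenorm n R) (w.flatMap (iterSubst n R)) = weight l w := by
  induction R generalizing l w with
  | zero => rw [iterRenorm, vecMul_one, flatMap_iterSubst_zero]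
  | succ R ih =>
    rw [iterRenorm, ← vecMul_vecMul, flatMap_iterSubst_succ, ih, weight_vecMul_renormMatrix]

lemma weight_iterSubst_vecMul_iterRenorm (n : ℕ → ℕ) (R : ℕ) (l : Fin 3 → ℝ) :
    (fun a => weight l (iterSubst n R a)) ᵥ* iterRenorm n R = l := by
  induction R generalizing l with
  | zero => simp [iterRenorm, iterSubst]
  | succ R ih =>
    simp only [iterSubst, iterRenorm, weight_flatMap, ← vecMul_vecMul,
      weight_infimaxSubst_vecMul_renormMatrix, ih]

lemma eq_zero_of_iterRenorm_mulVec_eq_zero {n : ℕ → ℕ} {R : ℕ} {v : Fin 3 → ℝ}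
    (h : iterRenorm n R *ᵥ v = 0) : v = 0 := by
  refine dotProduct_eq_zero _ fun l => ?_
  rw [dotProduct_comm, ← weight_iterSubst_vecMul_iterRenorm n R l, ← dotProduct_mulVec, h,
    dotProduct_zero]

end Matrix

section WordRenormalization

/-- Every suffix of the word `x` is lexicographically smaller than `P`. -/
def SuffixesBelow {A : Type*} [LT A] (P x : List A) : Prop := ∀ y, y <:+ x → y < P

lemma SuffixesBelow.of_cons {A : Type*} [LT A] {P x : List A} {a : A}
    (h : SuffixesBelow P (a :: x)) : SuffixesBelow P x :=
  fun y hy => h y (hy.trans (List.suffix_cons a x))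

lemma SuffixesBelow.cons {A : Type*} [LT A] {P x : List A} {a : A} (h : SuffixesBelow P x)
    (ha : a :: x < P) : SuffixesBelow P (a :: x) := fun y hy => by
  obtain rfl | hy := List.suffix_cons_iff.1 hy
  · exact ha
  · exact h y hy

lemma SuffixesBelow.dropLast_cons {A : Type*} [LT A] {P u : List A} {a : A}
    (h : SuffixesBelow P u.dropLast) (ha : (a :: u).dropLast < P) :
    SuffixesBelow P (a :: u).dropLast := by
  cases u with
  | nil => exact fun y hy => List.suffix_nil.1 hy ▸ ha
  | cons b u => exact h.cons ha

/-- Up to the padding `0ⁿ`, the word `x` is a rearrangement of `0^q Λₙ(u)` which is not smaller,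
and `u` without its last letter satisfies the bound by `2p` on suffixes. -/
structure IsRenormalization (n : ℕ) (p x : List (Fin 3)) (q : ℕ) (u : List (Fin 3)) : Prop where
  perm : (x ++ List.replicate n 0).Perm (List.replicate q 0 ++ u.flatMap (infimaxSubst n))
  le : List.replicate q 0 ++ u.flatMap (infimaxSubst n) ≤ x ++ List.replicate n 0
  below : SuffixesBelow (2 :: p) u.dropLast

namespace IsRenormalization

variable {n q m : ℕ} {p x u : List (Fin 3)}

lemma nil (n : ℕ) (p : List (Fin 3)) : IsRenormalization n p [] n [] where
  perm := by simp
  le := by simp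
  below y hy := by
    rw [List.suffix_nil.1 hy]
    exact List.nil_lt_cons _ _

lemma cons_zero (h : IsRenormalization n p x q u) : IsRenormalization n p (0 :: x) (q + 1) u where
  perm := h.perm.cons 0
  le := list_cons_le_cons_iff.2 (.inr ⟨rfl, h.le⟩)
  below := h.below

lemma cons_le_cons_append (h : IsRenormalization n p x q u) (b : Fin 3) :
    b :: (List.replicate q 0 ++ u.flatMap (infimaxSubst n)) ≤ b :: x ++ List.replicate n 0 :=
  list_cons_le_cons_iff.2 (.inr ⟨rfl, h.le⟩)

lemma below_cons (h : IsRenormalization n p x q u) {c : Fin 3} (hc : c < 2) :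
    SuffixesBelow (2 :: p) (c :: u).dropLast := by
  refine h.below.dropLast_cons ?_
  cases u with
  | nil => exact List.nil_lt_cons _ _
  | cons b u => exact List.cons_lt_cons_iff.2 (.inl hc)

lemma cons_one (h : IsRenormalization n p x q u) : IsRenormalization n p (1 :: x) q (0 :: u) where
  perm := (h.perm.cons 1).trans List.perm_middle.symm
  le := (replicate_append_cons_le q Fin.zero_lt_one).trans (h.cons_le_cons_append 1)
  below := h.below_cons (by decide)

lemma cons_two_of_add (h : IsRenormalization n p x (m + (n + 1)) u) :
    IsRenormalization n p (2 :: x) m (1 :: u) where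
  perm := by
    refine (h.perm.cons 2).trans ?_
    rw [List.replicate_add, List.append_assoc]
    exact List.perm_middle.symm
  le := by
    refine le_trans ?_ (h.cons_le_cons_append 2)
    rw [List.replicate_add, List.append_assoc]
    exact replicate_append_cons_le m (by decide)
  below := h.below_cons (by decide)

lemma cons_append_le (h : IsRenormalization n p x q u)
    (hx : 2 :: x < (2 :: p).flatMap (infimaxSubst n)) :
    2 :: (List.replicate q 0 ++ u.flatMap (infimaxSubst n)) ≤
      (2 :: p).flatMap (infimaxSubst n) ++ List.replicate n 0 :=
  (h.cons_le_cons_append 2).trans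
    (append_replicate_le_append_replicate (fun _ => Fin.zero_le _) n hx)

lemma cons_two (h : IsRenormalization n p x n u)
    (hx : 2 :: x < (2 :: p).flatMap (infimaxSubst n)) :
    IsRenormalization n p (2 :: x) 0 (2 :: u) where
  perm := h.perm.cons 2
  le := h.cons_le_cons_append 2
  below := by
    refine h.below.dropLast_cons (not_le.1 fun hle => (h.cons_append_le hx).not_gt ?_)
    have key := flatMap_infimaxSubst_append_lt n ((2 :: u).getLast (by simp)) hle
    rwa [List.dropLast_concat_getLast] at key

lemma le_of_cons_two_lt (h : IsRenormalization n p x q u)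
    (hx : 2 :: x < (2 :: p).flatMap (infimaxSubst n)) : n ≤ q := by
  by_contra! hq
  have hu : u ≠ [] := by
    rintro rfl
    have := h.perm.length_eq
    simp only [List.length_append, List.length_replicate, List.flatMap_nil, List.length_nil] at this
    omega
  obtain ⟨c, t, hc, ht⟩ := exists_flatMap_infimaxSubst_eq_cons n hu
  obtain ⟨m, rfl⟩ := Nat.exists_eq_add_of_lt hq
  have hle := h.cons_append_le hx
  rw [ht, List.flatMap_cons, infimaxSubst_two, add_assoc, List.replicate_add,
    List.replicate_succ] at hle
  simp only [List.cons_append, List.append_assoc, list_cons_le_cons_iff, lt_irrefl, true_and,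
    false_or, list_append_le_append_iff] at hle
  exact hle.elim (Fin.not_lt_zero c) fun h => hc.ne' h.1

end IsRenormalization

lemma exists_isRenormalization {n : ℕ} {p x : List (Fin 3)}
    (hx : SuffixesBelow ((2 :: p).flatMap (infimaxSubst n)) x) :
    ∃ q u, IsRenormalization n p x q u := by
  induction x with
  | nil => exact ⟨n, [], .nil n p⟩
  | cons b x ih =>
    obtain ⟨q, u, h⟩ := ih hx.of_cons
    obtain rfl | rfl | rfl : b = 0 ∨ b = 1 ∨ b = 2 := by omega
    · exact ⟨q + 1, u, h.cons_zero⟩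
    · exact ⟨q, 0 :: u, h.cons_one⟩
    · have hlt := hx _ List.suffix_rfl
      obtain rfl | hq := (h.le_of_cons_two_lt hlt).eq_or_lt
      · exact ⟨0, 2 :: u, h.cons_two hlt⟩
      · obtain ⟨m, rfl⟩ := Nat.exists_eq_add_of_le' hq
        exact ⟨m, 1 :: u, h.cons_two_of_add⟩

end WordRenormalization

section WeightBound

open Matrix

/-- The functional `l` is bounded above on the words all of whose suffixes lie below `P`. -/
def BddAboveOnWordsBelow {A : Type*} [LT A] (P : List A) (l : A → ℝ) : Prop :=
  ∃ c, ∀ x, SuffixesBelow P x → weight l x ≤ c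

/-- The cone of functionals that are nonpositive on `0`, `1` and nonnegative on `2`. -/
def IsTwoDominant (l : Fin 3 → ℝ) : Prop := l 0 ≤ 0 ∧ l 1 ≤ 0 ∧ 0 ≤ l 2

lemma IsTwoDominant.vecMul_renormMatrix {l : Fin 3 → ℝ} (h : IsTwoDominant l) (n : ℕ) :
    IsTwoDominant (l ᵥ* renormMatrix n) := by
  obtain ⟨h0, h1, h2⟩ := h
  rw [_root_.vecMul_renormMatrix]
  refine ⟨sub_nonpos.2 (h1.trans h2), h0, ?_⟩
  change 0 ≤ (n + 1) * l 2 - n * l 1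
  nlinarith [n.cast_nonneg (α := ℝ)]

lemma weight_le_weight_dropLast_add {A : Type*} [Fintype A] (l : A → ℝ) (u : List A) :
    weight l u ≤ weight l u.dropLast + ‖l‖ := by
  obtain rfl | ⟨d, a, rfl⟩ := List.eq_nil_or_concat' u
  · simp
  · have := (le_abs_self (l a)).trans (norm_le_pi_norm l a)
    simpa using this

lemma BddAboveOnWordsBelow.flatMap_infimaxSubst {p : List (Fin 3)} {l : Fin 3 → ℝ}
    (hl : IsTwoDominant l) (h : BddAboveOnWordsBelow (2 :: p) l) (n : ℕ) :
    BddAboveOnWordsBelow ((2 :: p).flatMap (infimaxSubst n)) (l ᵥ* renormMatrix n) := by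
  obtain ⟨c, hc⟩ := h
  set l' := l ᵥ* renormMatrix n with hl'
  refine ⟨c + ‖l‖ - n * l' 0, fun x hx => ?_⟩
  obtain ⟨q, u, hu⟩ := exists_isRenormalization hx
  have hweight : weight l' x + n * l' 0 = q * l' 0 + weight l u := by
    simpa [hl', weight_vecMul_renormMatrix] using weight_eq_of_perm l' hu.perm
  have hq : q * l' 0 ≤ 0 :=
    mul_nonpos_of_nonneg_of_nonpos q.cast_nonneg (hl.vecMul_renormMatrix n).1
  have hu_le : weight l u ≤ c + ‖l‖ :=
    (weight_le_weight_dropLast_add l u).trans (by gcongr; exact hc _ hu.below)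
  linarith

lemma BddAboveOnWordsBelow.flatMap_iterSubst {p : List (Fin 3)} {l : Fin 3 → ℝ}
    (hl : IsTwoDominant l) (h : BddAboveOnWordsBelow (2 :: p) l) (n : ℕ → ℕ) (R : ℕ) :
    BddAboveOnWordsBelow ((2 :: p).flatMap (iterSubst n R)) (l ᵥ* iterRenorm n R) := by
  induction R generalizing p l with
  | zero => rwa [flatMap_iterSubst_zero, iterRenorm, vecMul_one]
  | succ R ih =>
    rw [flatMap_iterSubst_succ, iterRenorm, ← vecMul_vecMul]
    exact ih (hl.vecMul_renormMatrix _) (h.flatMap_infimaxSubst hl _)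

/-- The functional which is bounded on the words without `k + 1` consecutive letters `2`. -/
def runFunctional (k : ℕ) : Fin 3 → ℝ := ![-k, -k, 1]

lemma isTwoDominant_runFunctional (k : ℕ) : IsTwoDominant (runFunctional k) := by
  simp [IsTwoDominant, runFunctional]

lemma SuffixesBelow.le_of_replicate_prefix {A : Type*} [LinearOrder A] {a : A} {x : List A}
    {j k : ℕ} (hx : SuffixesBelow (List.replicate (k + 1) a) x)
    (hj : List.replicate j a <+: x) : j ≤ k := by
  by_contra! hjk
  have hpre : List.replicate (k + 1) a <+: x :=
    (List.prefix_replicate_iff.2 ⟨by simpa using hjk, by simp⟩).trans hj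
  exact (list_le_of_prefix hpre).not_gt (hx x List.suffix_rfl)

lemma exists_replicate_prefix_weight_runFunctional_le {k : ℕ} {x : List (Fin 3)}
    (hx : SuffixesBelow (List.replicate (k + 1) 2) x) :
    ∃ j : ℕ, List.replicate j 2 <+: x ∧ weight (runFunctional k) x ≤ j := by
  induction x with
  | nil => exact ⟨0, List.nil_prefix, by simp⟩
  | cons b x ih =>
    obtain ⟨j, hpre, hj⟩ := ih hx.of_cons
    have hjk : (j : ℝ) ≤ k := by exact_mod_cast hx.of_cons.le_of_replicate_prefix hpre
    obtain rfl | rfl | rfl : b = 0 ∨ b = 1 ∨ b = 2 := by omega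
    · exact ⟨0, List.nil_prefix, by simpa [runFunctional] using hj.trans hjk⟩
    · exact ⟨0, List.nil_prefix, by simpa [runFunctional] using hj.trans hjk⟩
    · refine ⟨j + 1, List.cons_prefix_cons.2 ⟨rfl, hpre⟩, ?_⟩
      simp only [weight_cons, Nat.cast_succ]
      exact (add_comm _ _).trans_le (add_le_add_left hj 1)

lemma bddAboveOnWordsBelow_replicate (k : ℕ) :
    BddAboveOnWordsBelow (List.replicate (k + 1) 2) (runFunctional k) := by
  refine ⟨k, fun x hx => ?_⟩
  obtain ⟨j, hpre, hj⟩ := exists_replicate_prefix_weight_runFunctional_le hx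
  exact hj.trans (by exact_mod_cast hx.le_of_replicate_prefix hpre)

/-- The word `Λ_{n₀} ⋯ Λ_{n_{R-1}}(2^(k+1))`, for suitable `R` and `k` a prefix of the infimax
sequence with itinerary `n`. -/
def infimaxWord (n : ℕ → ℕ) (R k : ℕ) : List (Fin 3) :=
  (List.replicate (k + 1) 2).flatMap (iterSubst n R)

/-- The pullback of `runFunctional k` under `R` renormalization steps, which is bounded on the words
below `infimaxWord n R k`. -/
def infimaxFunctional (n : ℕ → ℕ) (R k : ℕ) : Fin 3 → ℝ := runFunctional k ᵥ* iterRenorm n R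

lemma bddAboveOnWordsBelow_infimaxWord (n : ℕ → ℕ) (R k : ℕ) :
    BddAboveOnWordsBelow (infimaxWord n R k) (infimaxFunctional n R k) :=
  (bddAboveOnWordsBelow_replicate k).flatMap_iterSubst (isTwoDominant_runFunctional k) n R

end WeightBound

section SubstSeq

variable {f g : Fin 3 → List (Fin 3)}

/-- The image of a sequence under a non-erasing substitution. The first `j + 1` blocks contain the
letter at position `j`, so that the default value `0` is never used. -/
def substSeq (f : Fin 3 → List (Fin 3)) (u : Seq3) : Seq3 :=
  fun j => ((prefixWord u (j + 1)).flatMap f).getD j 0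

lemma le_length_flatMap_prefixWord (hf : ∀ a, f a ≠ []) (u : Seq3) (N : ℕ) :
    N ≤ ((prefixWord u N).flatMap f).length := by
  simpa using length_le_length_flatMap hf (prefixWord u N)

lemma prefixWord_substSeq (hf : ∀ a, f a ≠ []) (u : Seq3) (N : ℕ) :
    prefixWord (substSeq f u) ((prefixWord u N).flatMap f).length = (prefixWord u N).flatMap f := by
  refine List.ext_getElem (by simp) fun j hj hj' => ?_
  have hlen : j < ((prefixWord u (j + 1)).flatMap f).length :=
    le_length_flatMap_prefixWord hf u (j + 1)
  rw [getElem_prefixWord, substSeq, List.getD_eq_getElem _ _ hlen]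
  rcases le_total N (j + 1) with h | h
  · exact (((prefixWord_prefix u h).flatMap f).getElem hj').symm
  · exact ((prefixWord_prefix u h).flatMap f).getElem hlen

lemma eq_substSeq_of_forall_prefixWord (hf : ∀ a, f a ≠ []) {u t : Seq3}
    (h : ∀ N, prefixWord t ((prefixWord u N).flatMap f).length = (prefixWord u N).flatMap f) :
    t = substSeq f u :=
  funext fun j => prefixWord_eq_iff.1 ((h (j + 1)).trans (prefixWord_substSeq hf u (j + 1)).symm) j
    (le_length_flatMap_prefixWord hf u (j + 1))

lemma prefixWord_substSeq_prefix (hf : ∀ a, f a ≠ []) (u : Seq3) (N : ℕ) :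
    prefixWord (substSeq f u) N <+: (prefixWord u N).flatMap f := by
  rw [← prefixWord_substSeq hf]
  exact prefixWord_prefix _ (le_length_flatMap_prefixWord hf u N)

lemma substSeq_apply_of_lt (hf : ∀ a, f a ≠ []) (u : Seq3) {i : ℕ} (hi : i < (f (u 0)).length) :
    substSeq f u i = (f (u 0))[i] := by
  have h := prefixWord_substSeq hf u 1
  rw [show (prefixWord u 1).flatMap f = f (u 0) by simp [prefixWord]] at h
  simp only [← getElem_prefixWord (substSeq f u) (N := (f (u 0)).length) (by simpa using hi), h]

lemma shift_iterate_substSeq (hf : ∀ a, f a ≠ []) (u : Seq3) :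
    shift^[(f (u 0)).length] (substSeq f u) = substSeq f (shift u) := by
  refine eq_substSeq_of_forall_prefixWord hf fun N => ?_
  have h := prefixWord_substSeq hf u (N + 1)
  rw [prefixWord_succ_eq_cons, List.flatMap_cons, List.length_append, prefixWord_add] at h
  exact (List.append_inj h (by simp)).2

lemma exists_shift_iterate_substSeq_eq (hf : ∀ a, f a ≠ []) (u : Seq3) (j : ℕ) :
    ∃ m, ∃ i < (f (u m)).length,
      shift^[j] (substSeq f u) = shift^[i] (substSeq f (shift^[m] u)) := by
  induction j with
  | zero => exact ⟨0, 0, List.length_pos_iff.2 (hf _), rfl⟩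
  | succ j ih =>
    obtain ⟨m, i, hi, h⟩ := ih
    obtain hi' | hi' : i + 1 < (f (u m)).length ∨ i + 1 = (f (u m)).length := by omega
    · refine ⟨m, i + 1, hi', ?_⟩
      rw [Function.iterate_succ_apply', h, Function.iterate_succ_apply']
    · refine ⟨m + 1, 0, List.length_pos_iff.2 (hf _), ?_⟩
      rw [Function.iterate_succ_apply', h, ← Function.iterate_succ_apply' shift i,
        Nat.succ_eq_add_one, hi', Function.iterate_succ_apply' shift m]
      simpa [shift_iterate_apply] using shift_iterate_substSeq hf (shift^[m] u)

lemma substSeq_flatMap (hf : ∀ a, f a ≠ []) (hg : ∀ a, g a ≠ []) (u : Seq3) :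
    substSeq (fun a => (g a).flatMap f) u = substSeq f (substSeq g u) := by
  have hgf : ∀ a, (g a).flatMap f ≠ [] := fun a h =>
    hg a (List.eq_nil_iff_length_eq_zero.2 (by simpa [h] using length_le_length_flatMap hf (g a)))
  refine (eq_substSeq_of_forall_prefixWord hgf fun N => ?_).symm
  rw [← List.flatMap_assoc, ← prefixWord_substSeq hg]
  exact prefixWord_substSeq hf _ _

lemma substSeq_infimaxSubst_lexLe (n : ℕ) {u u' : Seq3} (h : lexLe u' u) :
    lexLe (substSeq (infimaxSubst n) u') (substSeq (infimaxSubst n) u) := by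
  rw [lexLe_iff_forall_prefixWord_le] at h ⊢
  by_contra! hlt
  obtain ⟨N, hlt⟩ := hlt
  have hpre (v : Seq3) := prefixWord_substSeq_prefix (infimaxSubst_ne_nil n) v N
  have hlt' : (prefixWord u (N + 1)).flatMap (infimaxSubst n) <
      (prefixWord u' N).flatMap (infimaxSubst n) :=
    list_lt_of_prefix_of_prefix ((hpre u).trans ((prefixWord_prefix u N.le_succ).flatMap _))
      (hpre u') (by simp) hlt
  have hkey := flatMap_infimaxSubst_append_lt n (u N) (h N)
  rw [← prefixWord_succ] at hkey
  exact (hlt'.trans_le (list_le_of_prefix (List.prefix_append _ _))).not_gt hkey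

lemma substSeq_infimaxSubst_mem_MaxSet (n : ℕ) {u : Seq3} (hu : u ∈ MaxSet) :
    substSeq (infimaxSubst n) u ∈ MaxSet := by
  have hne := infimaxSubst_ne_nil n
  have hzero : substSeq (infimaxSubst n) u 0 = 2 := by
    rw [substSeq_apply_of_lt hne u (List.length_pos_iff.2 (hne _))]
    simp [hu.1]
  refine ⟨hzero, fun j => ?_⟩
  obtain ⟨m, i, hi, h⟩ := exists_shift_iterate_substSeq_eq hne u j
  rw [h]
  obtain - | i := i
  · exact substSeq_infimaxSubst_lexLe n (hu.2 m)
  · obtain ⟨c, t, -, hct, ht⟩ := exists_infimaxSubst_eq_cons n (u m)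
    have hi' : i < t.length := by simpa [hct] using hi
    have happly : shift^[i + 1] (substSeq (infimaxSubst n) (shift^[m] u)) 0 = t[i] := by
      rw [shift_iterate_apply, substSeq_apply_of_lt hne _ (by simpa [shift_iterate_apply] using hi)]
      simp [shift_iterate_apply, hct]
    have hne_two : t[i] ≠ 2 := fun h => ht (h ▸ List.getElem_mem hi')
    exact .inr ⟨0, by simp, by omega⟩

lemma substSeq_iterSubst_mem_MaxSet (n : ℕ → ℕ) (R : ℕ) {u : Seq3} (hu : u ∈ MaxSet) :
    substSeq (iterSubst n R) u ∈ MaxSet := by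
  induction R generalizing u with
  | zero =>
    rwa [← eq_substSeq_of_forall_prefixWord (iterSubst_ne_nil n 0) (t := u)
      fun N => by simp [flatMap_iterSubst_zero]]
  | succ R ih =>
    have h := ih (substSeq_infimaxSubst_mem_MaxSet (n R) hu)
    rwa [← substSeq_flatMap (iterSubst_ne_nil n R) (infimaxSubst_ne_nil (n R))] at h

end SubstSeq

section Discrepancy

open Matrix

/-- The functionals vanishing on `a` are bounded on the prefixes of `u`: the letter counts of these
prefixes stay at bounded distance from the line spanned by `a`. -/
def HasBoundedDiscrepancy {A : Type*} [Fintype A] (u : ℕ → A) (a : A → ℝ) : Prop :=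
  ∀ l, l ⬝ᵥ a = 0 → ∃ D, ∀ N, |weight l (prefixWord u N)| ≤ D

lemma HasBoundedDiscrepancy.substSeq {f : Fin 3 → List (Fin 3)} (hf : ∀ a, f a ≠ [])
    {M : Matrix (Fin 3) (Fin 3) ℝ} (hM : ∀ l, (fun b => weight l (f b)) ᵥ* M = l) {u : Seq3}
    {a : Fin 3 → ℝ} (h : HasBoundedDiscrepancy u (M *ᵥ a)) :
    HasBoundedDiscrepancy (substSeq f u) a := by
  intro l hl
  obtain ⟨D, hD⟩ := h (fun b => weight l (f b)) (by rw [dotProduct_mulVec, hM, hl])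
  obtain ⟨L, hL⟩ := (Set.finite_range fun b => (f b).length).bddAbove
  rw [mem_upperBounds, Set.forall_mem_range] at hL
  refine ⟨D + L * ‖l‖, fun N => ?_⟩
  obtain ⟨w, s, hw, hs, h⟩ :=
    exists_prefix_eq_flatMap_append hL (prefixWord_substSeq_prefix hf u N)
  rw [h, weight_append, weight_flatMap, eq_prefixWord_of_prefix hw]
  exact (abs_add_le _ _).trans (add_le_add (hD _) (abs_weight_le_of_length_le l hs))

lemma HasBoundedDiscrepancy.of_shift_iterate {m : ℕ} {u : Seq3} {a : Fin 3 → ℝ}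
    (h : HasBoundedDiscrepancy (shift^[m] u) a) : HasBoundedDiscrepancy u a := by
  intro l hl
  obtain ⟨D, hD⟩ := h l hl
  refine ⟨m * ‖l‖ + D, fun N => ?_⟩
  rcases le_total N m with hN | hN
  · exact (abs_weight_le_of_length_le l (by simpa using hN)).trans
      (le_add_of_nonneg_right ((abs_nonneg _).trans (hD 0)))
  · obtain ⟨k, rfl⟩ := Nat.exists_eq_add_of_le hN
    rw [prefixWord_add, weight_append]
    exact (abs_add_le _ _).trans
      (add_le_add (abs_weight_le_of_length_le l (by simp)) (hD k))

lemma HasBoundedDiscrepancy.smul {A : Type*} [Fintype A] {u : ℕ → A} {a : A → ℝ}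
    (h : HasBoundedDiscrepancy u a) {c : ℝ} (hc : c ≠ 0) : HasBoundedDiscrepancy u (c • a) :=
  fun l hl => h l (by simpa [hc] using hl)

end Discrepancy

section Counts

open Matrix

variable {A : Type*} [DecidableEq A]

/-- The letter counts (abelianization) of a word. -/
def parikh (w : List A) : A → ℝ := fun a => w.count a

lemma parikh_append (w w' : List A) : parikh (w ++ w') = parikh w + parikh w' := by
  ext a
  simp [parikh]

lemma parikh_singleton (a : A) : parikh [a] = Pi.single a 1 := by
  ext b
  simp [parikh, List.count_singleton', Pi.single_apply, eq_comm]

variable [Fintype A]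

lemma weight_eq_dotProduct_parikh (l : A → ℝ) (w : List A) : weight l w = l ⬝ᵥ parikh w := by
  induction w with
  | nil => simp [parikh, dotProduct]
  | cons a w ih =>
    rw [weight_cons, ih, ← List.singleton_append, parikh_append, parikh_singleton, dotProduct_add,
      dotProduct_single_one]

lemma sum_parikh (w : List A) : ∑ a, parikh w a = w.length := by
  simpa [weight, dotProduct] using (weight_eq_dotProduct_parikh (fun _ => 1) w).symm

lemma exists_count_le_length_mul {p : A → ℝ} (hp : ∑ a, p a = 1) (w : List A) :
    ∃ a, (w.count a : ℝ) ≤ w.length * p a := by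
  by_contra! h
  have hne : (Finset.univ : Finset A).Nonempty := by
    by_contra! hempty
    simp [hempty] at hp
  have := Finset.sum_lt_sum_of_nonempty hne fun a _ => h a
  rw [← Finset.mul_sum, hp, mul_one] at this
  exact this.ne' (sum_parikh w)

-- Greedy choice: the next letter is one which has not yet exceeded its expected count.
lemma exists_seq_count_le {p : A → ℝ} (h0 : 0 ≤ p) (hp : ∑ a, p a = 1) :
    ∃ s : ℕ → A, ∀ N a, ((prefixWord s N).count a : ℝ) ≤ N * p a + 1 := by
  choose next hnext using exists_count_le_length_mul hp
  let W : ℕ → List A := fun N => N.rec [] fun _ w => w ++ [next w]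
  have hW (N : ℕ) : prefixWord (fun N => next (W N)) N = W N := by
    induction N with
    | zero => rfl
    | succ N ih => rw [prefixWord_succ, ih]
  refine ⟨fun N => next (W N), fun N a => ?_⟩
  induction N with
  | zero => simp [prefixWord]
  | succ N ih =>
    have hlen : (W N).length = N := by rw [← hW, length_prefixWord]
    have hpa : 0 ≤ p a := h0 a
    rw [hW] at ih
    rw [prefixWord_succ, hW, List.count_append, List.count_singleton', Nat.cast_succ]
    split_ifs with ha
    · have := hnext (W N)
      rw [ha, hlen] at this
      push_cast
      linarith
    · push_cast
      linarith

lemma exists_seq_abs_count_sub_le {p : A → ℝ} (h0 : 0 ≤ p) (hp : ∑ a, p a = 1) :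
    ∃ s : ℕ → A, ∀ N a, |parikh (prefixWord s N) a - N * p a| ≤ Fintype.card A := by
  obtain ⟨s, hs⟩ := exists_seq_count_le h0 hp
  refine ⟨s, fun N a => ?_⟩
  set d : A → ℝ := fun b => N * p b + 1 - parikh (prefixWord s N) b with hd
  have hd0 (b : A) : 0 ≤ d b := sub_nonneg.2 (hs N b)
  have hsum : ∑ b, d b = Fintype.card A := by
    simp [hd, Finset.sum_sub_distrib, Finset.sum_add_distrib, ← Finset.mul_sum, hp, sum_parikh]
  have hda : d a ≤ Fintype.card A :=
    hsum ▸ Finset.single_le_sum (fun b _ => hd0 b) (Finset.mem_univ a)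
  have hcard : (1 : ℝ) ≤ Fintype.card A := by
    exact_mod_cast Fintype.card_pos_iff.2 ⟨a⟩
  have := hd0 a
  rw [abs_le]
  constructor <;> simp only [hd] at * <;> linarith

lemma hasBoundedDiscrepancy_of_abs_parikh_sub_le {s : ℕ → A} {p : A → ℝ} {D : ℝ}
    (h : ∀ N a, |parikh (prefixWord s N) a - N * p a| ≤ D) : HasBoundedDiscrepancy s p := by
  intro l hl
  refine ⟨∑ a, |l a| * D, fun N => ?_⟩
  have hweight : weight l (prefixWord s N) = ∑ a, l a * (parikh (prefixWord s N) a - N * p a) := by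
    calc weight l (prefixWord s N) = l ⬝ᵥ (parikh (prefixWord s N) - (N : ℝ) • p) := by
          rw [dotProduct_sub, dotProduct_smul, hl, smul_zero, sub_zero, weight_eq_dotProduct_parikh]
      _ = _ := rfl
  rw [hweight]
  refine (Finset.abs_sum_le_sum_abs _ _).trans (Finset.sum_le_sum fun a _ => ?_)
  rw [abs_mul]
  gcongr
  exact h N a

end Counts

section Balanced

open Matrix

lemma exists_ne_of_abs_parikh_sub_le {A : Type*} [DecidableEq A] {s : ℕ → A}
    {p : A → ℝ} {D : ℝ} {a : A} (ha : p a < 1)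
    (h : ∀ N, |parikh (prefixWord s N) a - N * p a| ≤ D) :
    ∃ L : ℕ, ∀ m, ∃ i < L, s (m + i) ≠ a := by
  obtain ⟨L, hL⟩ := exists_nat_gt (2 * D / (1 - p a))
  refine ⟨L, fun m => ?_⟩
  by_contra! hrun
  have hcount : parikh (prefixWord s (m + L)) a = parikh (prefixWord s m) a + L := by
    have hmap : (List.range L).map (s ∘ (m + ·)) = List.replicate L a :=
      List.eq_replicate_iff.2 ⟨by simp, by simpa using hrun⟩
    simp [prefixWord, List.range_add, parikh, hmap]
  have hm := abs_le.1 (h m)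
  have hmL := abs_le.1 (h (m + L))
  rw [hcount, Nat.cast_add] at hmL
  rw [div_lt_iff₀ (sub_pos.2 ha)] at hL
  linarith

lemma mem_MaxSet_of_forall_exists_ne_two {u : Seq3} {L : ℕ} (hL : 0 < L) (htwo : ∀ i < L, u i = 2)
    (hrun : ∀ r ≥ 1, ∃ i < L, u (r + i) ≠ 2) : u ∈ MaxSet := by
  refine ⟨htwo 0 hL, fun r => ?_⟩
  obtain rfl | hr := r.eq_zero_or_pos
  · exact .inl rfl
  by_contra hlex
  obtain ⟨n, heq, hlt⟩ := not_lexLe_iff.1 hlex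
  obtain ⟨i, hi, hne⟩ := hrun r hr
  have hn : L ≤ n := by
    by_contra! hn
    rw [htwo n hn] at hlt
    omega
  rw [← shift_iterate_apply r i u, ← heq i (hi.trans_le hn)] at hne
  exact hne (htwo i hi)

/-- The sequence `2^L 0 s`. -/
def twosThen (L : ℕ) (s : Seq3) : Seq3 :=
  fun i => if i < L then 2 else if i = L then 0 else s (i - (L + 1))

lemma shift_iterate_twosThen (L : ℕ) (s : Seq3) : shift^[L + 1] (twosThen L s) = s := by
  ext1 i
  rw [shift_iterate_apply, twosThen, if_neg (by omega), if_neg (by omega), Nat.add_sub_cancel_left]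

lemma twosThen_mem_MaxSet {L : ℕ} (hL : 0 < L) {s : Seq3} (hs : ∀ m, ∃ i < L, s (m + i) ≠ 2) :
    twosThen L s ∈ MaxSet := by
  refine mem_MaxSet_of_forall_exists_ne_two hL (fun i hi => if_pos hi) fun r hr => ?_
  rcases le_or_gt r L with hrL | hrL
  · exact ⟨L - r, by omega, by simp [twosThen, Nat.add_sub_of_le hrL]⟩
  · obtain ⟨m, rfl⟩ := Nat.exists_eq_add_of_le hrL
    obtain ⟨i, hi, hne⟩ := hs m
    refine ⟨i, hi, ?_⟩
    rwa [Nat.succ_eq_add_one, add_assoc, ← shift_iterate_apply (L + 1) (m + i) (twosThen L s),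
      shift_iterate_twosThen]

lemma exists_mem_MaxSet_of_sum_eq_one {p : Fin 3 → ℝ} (h0 : 0 ≤ p) (hp : ∑ i, p i = 1)
    (h2 : p 2 < 1) (k : ℕ) :
    ∃ u ∈ MaxSet, HasBoundedDiscrepancy u p ∧ prefixWord u k = List.replicate k 2 := by
  obtain ⟨s, hs⟩ := exists_seq_abs_count_sub_le h0 hp
  obtain ⟨L, hL⟩ := exists_ne_of_abs_parikh_sub_le h2 fun N => hs N 2
  have hrun (m : ℕ) : ∃ i < L + k, s (m + i) ≠ 2 :=
    (hL m).imp fun i hi => ⟨hi.1.trans_le (Nat.le_add_right L k), hi.2⟩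
  have hpos : 0 < L + k := by
    obtain ⟨i, hi, -⟩ := hrun 0
    omega
  refine ⟨twosThen (L + k) s, twosThen_mem_MaxSet hpos hrun, ?_,
    prefixWord_eq_replicate fun i hi => if_pos (hi.trans_le (Nat.le_add_left k L))⟩
  refine HasBoundedDiscrepancy.of_shift_iterate (m := L + k + 1) ?_
  rw [shift_iterate_twosThen]
  exact hasBoundedDiscrepancy_of_abs_parikh_sub_le hs

lemma const_two_mem_MaxSet : (fun _ => 2 : Seq3) ∈ MaxSet :=
  ⟨rfl, fun r => .inl (funext fun i => shift_iterate_apply r i _)⟩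

lemma hasBoundedDiscrepancy_const {A : Type*} [Fintype A] [DecidableEq A] (a : A) :
    HasBoundedDiscrepancy (fun _ => a) (Pi.single a 1) := fun l hl =>
  ⟨0, fun N => by
    rw [dotProduct_single_one] at hl
    simp [prefixWord_eq_replicate (s := fun _ => a) (N := N) fun _ _ => rfl, hl]⟩

lemma exists_mem_MaxSet_hasBoundedDiscrepancy {a : Fin 3 → ℝ} (h0 : 0 ≤ a) (h2 : 0 < a 2) (k : ℕ) :
    ∃ u ∈ MaxSet, HasBoundedDiscrepancy u a ∧ prefixWord u k = List.replicate k 2 := by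
  have h00 : 0 ≤ a 0 := h0 0
  have h01 : 0 ≤ a 1 := h0 1
  set S := ∑ i, a i with hS
  rw [Fin.sum_univ_three] at hS
  have hS0 : 0 < S := by linarith
  have hscale : S • S⁻¹ • a = a := smul_inv_smul₀ hS0.ne' a
  have hsum : ∑ i, (S⁻¹ • a) i = 1 := by
    simp [← Finset.mul_sum, hS0.ne', S]
  rcases lt_or_ge (a 2) S with hlt | hge
  · obtain ⟨u, hu, hdisc, hpre⟩ := exists_mem_MaxSet_of_sum_eq_one
      (smul_nonneg (inv_nonneg.2 hS0.le) h0) hsum (by simpa [inv_mul_lt_one₀ hS0] using hlt) k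
    exact ⟨u, hu, hscale ▸ hdisc.smul hS0.ne', hpre⟩
  · refine ⟨fun _ => 2, const_two_mem_MaxSet, ?_, prefixWord_eq_replicate fun _ _ => rfl⟩
    have ha : a = a 2 • Pi.single 2 1 := by
      ext i
      fin_cases i <;> simp <;> linarith
    rw [ha]
    exact (hasBoundedDiscrepancy_const 2).smul h2.ne'

end Balanced

section Frequency

open Matrix

lemma birk_eq_parikh (s : Seq3) (N : ℕ) : birk s N = parikh (prefixWord s N) := by
  induction N with
  | zero => exact funext fun i => by simp [birk, prefixWord, parikh]
  | succ N ih =>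
    have hkappa : kappa (shift^[N] s) = Pi.single (s N) 1 := by
      ext i
      simp [kappa, shift_iterate_apply, Pi.single_apply]
    rw [birk, Finset.sum_range_succ, ← birk, ih, hkappa, prefixWord_succ, parikh_append,
      parikh_singleton]

lemma dotProduct_birk (l : Fin 3 → ℝ) (s : Seq3) (N : ℕ) :
    l ⬝ᵥ birk s N = weight l (prefixWord s N) := by
  rw [birk_eq_parikh, weight_eq_dotProduct_parikh]

lemma sum_birk (s : Seq3) (N : ℕ) : ∑ i, birk s N i = N := by
  rw [birk_eq_parikh, sum_parikh, length_prefixWord]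

lemma HasBoundedDiscrepancy.exists_abs_birk_sub_le {s : Seq3} {a : Fin 3 → ℝ}
    (h : HasBoundedDiscrepancy s a) (ha : ∑ i, a i = 1) (i : Fin 3) :
    ∃ D, ∀ N : ℕ, |birk s N i - N * a i| ≤ D := by
  have hdot (x : Fin 3 → ℝ) :
      (Pi.single i 1 - fun _ => a i) ⬝ᵥ x = x i - (∑ j, x j) * a i := by
    rw [sub_dotProduct, single_one_dotProduct, Finset.sum_mul]
    simp [dotProduct, mul_comm]
  obtain ⟨D, hD⟩ := h (Pi.single i 1 - fun _ => a i) (by rw [hdot, ha, one_mul, sub_self])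
  exact ⟨D, fun N => by rw [← sum_birk s, ← hdot, dotProduct_birk]; exact hD N⟩

lemma HasBoundedDiscrepancy.hasFreq {s : Seq3} {a : Fin 3 → ℝ} (h : HasBoundedDiscrepancy s a)
    (ha : ∑ i, a i = 1) : hasFreq s a := by
  refine tendsto_pi_nhds.2 fun i => ?_
  obtain ⟨D, hD⟩ := h.exists_abs_birk_sub_le ha i
  rw [tendsto_iff_norm_sub_tendsto_zero]
  refine squeeze_zero' (.of_forall fun _ => norm_nonneg _) ?_
    (tendsto_const_div_atTop_nhds_zero_nat D)
  filter_upwards [eventually_gt_atTop 0] with N hN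
  have hN' : (0 : ℝ) < N := by exact_mod_cast hN
  calc ‖((N : ℝ)⁻¹ • birk s N) i - a i‖ = |birk s N i - N * a i| / N := by
        rw [Real.norm_eq_abs, ← abs_of_pos hN', ← abs_div, abs_of_pos hN', Pi.smul_apply,
          smul_eq_mul]
        congr 1
        field_simp
    _ ≤ D / N := by
        gcongr
        exact hD N

lemma tendsto_dotProduct_smul_birk {s : ℕ → Seq3} {r : ℕ → ℕ} {v : Fin 3 → ℝ}
    (h : Tendsto (fun i => (r i : ℝ)⁻¹ • birk (s i) (r i)) atTop (𝓝 v)) (l : Fin 3 → ℝ) :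
    Tendsto (fun i => weight l (prefixWord (s i) (r i)) / r i) atTop (𝓝 (l ⬝ᵥ v)) := by
  have hcont : Continuous fun x : Fin 3 → ℝ => l ⬝ᵥ x := by fun_prop
  refine ((hcont.tendsto v).comp h).congr fun i => ?_
  rw [Function.comp_apply, dotProduct_smul, dotProduct_birk, smul_eq_mul, inv_mul_eq_div]

lemma dotProduct_nonpos_of_mem_DFMZ {X : Set Seq3} {v : Fin 3 → ℝ} (hv : v ∈ DFMZ X)
    {l : Fin 3 → ℝ} {c : ℝ} (h : ∀ s ∈ X, ∀ N, weight l (prefixWord s N) ≤ c) : l ⬝ᵥ v ≤ 0 := by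
  obtain ⟨s, r, hs, hr, ht⟩ := hv
  refine le_of_tendsto_of_tendsto (tendsto_dotProduct_smul_birk ht l)
    ((tendsto_const_div_atTop_nhds_zero_nat c).comp hr) (.of_forall fun i => ?_)
  simp only [Function.comp_apply]
  gcongr
  exact h (s i) (hs i) (r i)

lemma ne_zero_of_mem_DFMZ {X : Set Seq3} {v : Fin 3 → ℝ} (hv : v ∈ DFMZ X) : v ≠ 0 := by
  rintro rfl
  obtain ⟨s, r, -, hr, ht⟩ := hv
  have h := tendsto_dotProduct_smul_birk ht fun _ => 1
  rw [dotProduct_zero] at h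
  refine zero_ne_one (tendsto_nhds_unique h (tendsto_const_nhds.congr' ?_))
  filter_upwards [hr.eventually_gt_atTop 0] with i hi
  simp [weight, hi.ne']

lemma hasFreq.mem_DFMZ {s : Seq3} {v : Fin 3 → ℝ} (h : hasFreq s v) : v ∈ DFMZ {s} :=
  ⟨fun _ => s, id, fun _ => rfl, tendsto_id, h⟩

lemma BddAboveOnWordsBelow.dotProduct_nonpos {P : List (Fin 3)} {l : Fin 3 → ℝ}
    (h : BddAboveOnWordsBelow P l) {X : Set Seq3} {v : Fin 3 → ℝ} (hv : v ∈ DFMZ X)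
    (hX : ∀ s ∈ X, ∀ m, prefixWord (shift^[m] s) P.length < P) : l ⬝ᵥ v ≤ 0 := by
  obtain ⟨c, hc⟩ := h
  refine dotProduct_nonpos_of_mem_DFMZ hv fun s hs N => hc _ fun y hy => ?_
  obtain ⟨m, M, rfl⟩ := exists_eq_prefixWord_of_suffix hy
  exact prefixWord_lt_of_prefixWord_length_lt (hX s hs m) M

end Frequency

section Admissible

open Matrix

lemma iterRenorm_succ_mulVec (n : ℕ → ℕ) (R : ℕ) (v : Fin 3 → ℝ) :
    iterRenorm n (R + 1) *ᵥ v = renormMatrix (n R) *ᵥ (iterRenorm n R *ᵥ v) := by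
  rw [iterRenorm, mulVec_mulVec]

/-- The functional `infimaxFunctional n R k` is positive on every vector all of whose
renormalizations along `n` have a positive last coordinate. This makes `infimaxWord n R k` a prefix
of the infimax sequence with itinerary `n`. -/
def IsAdmissible (n : ℕ → ℕ) (R k : ℕ) : Prop :=
  ∀ v, (∀ j, 0 < (iterRenorm n j *ᵥ v) 2) → 0 < infimaxFunctional n R k ⬝ᵥ v

lemma isAdmissible_zero (n : ℕ → ℕ) (R : ℕ) : IsAdmissible n R 0 := fun v hv => by
  rw [infimaxFunctional, ← dotProduct_mulVec]
  simpa [runFunctional, dotProduct, Fin.sum_univ_three] using hv R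

lemma iterRenorm_add_two_mul_mulVec {n : ℕ → ℕ} {R : ℕ} (hn : ∀ j ≥ R, n j = 0) (v : Fin 3 → ℝ)
    (k : ℕ) :
    iterRenorm n (R + 2 * k) *ᵥ v =
      ![(iterRenorm n R *ᵥ v) 0, (iterRenorm n R *ᵥ v) 1,
        runFunctional k ⬝ᵥ (iterRenorm n R *ᵥ v)] := by
  induction k with
  | zero =>
    ext i
    fin_cases i <;> simp [runFunctional, dotProduct, Fin.sum_univ_three]
  | succ k ih =>
    rw [mul_add, mul_one, ← add_assoc, iterRenorm_succ_mulVec, iterRenorm_succ_mulVec, ih,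
      hn _ (by omega), hn _ (by omega)]
    simp only [renormMatrix_mulVec]
    ext i
    fin_cases i
    · simp
    · simp
    · simp only [runFunctional, dotProduct, Fin.sum_univ_three, Fin.reduceFinMk, cons_val,
        Nat.cast_zero, Nat.cast_succ]
      ring

lemma isAdmissible_of_forall_eq_zero {n : ℕ → ℕ} {R : ℕ} (hn : ∀ j ≥ R, n j = 0) (k : ℕ) :
    IsAdmissible n R k := fun v hv => by
  rw [infimaxFunctional, ← dotProduct_mulVec]
  simpa [iterRenorm_add_two_mul_mulVec hn v k] using hv (R + 2 * k)

lemma length_iterSubst_succ_two (n : ℕ → ℕ) (R : ℕ) :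
    (iterSubst n (R + 1) 2).length =
      (iterSubst n R 2).length + n R * (iterSubst n R 0).length := by
  simp [iterSubst, List.length_flatMap]

lemma monotone_length_iterSubst_two (n : ℕ → ℕ) : Monotone fun R => (iterSubst n R 2).length :=
  monotone_nat_of_le_succ fun R => by simp [length_iterSubst_succ_two]

lemma length_iterSubst_two_lt {n : ℕ → ℕ} {R : ℕ} (hR : n R ≠ 0) :
    (iterSubst n R 2).length < (iterSubst n (R + 1) 2).length := by
  have := List.length_pos_iff.2 (iterSubst_ne_nil n R 0)
  rw [length_iterSubst_succ_two]
  have := Nat.mul_pos (Nat.pos_of_ne_zero hR) this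
  omega

lemma exists_le_length_iterSubst_two {n : ℕ → ℕ} (hn : ∀ R, ∃ j ≥ R, n j ≠ 0) (r N : ℕ) :
    ∃ R ≥ r, N ≤ (iterSubst n R 2).length := by
  induction N with
  | zero => exact ⟨r, le_rfl, Nat.zero_le _⟩
  | succ N ih =>
    obtain ⟨R, hrR, hN⟩ := ih
    obtain ⟨j, hRj, hj⟩ := hn R
    exact ⟨j + 1, hrR.le.trans (hRj.le.trans j.le_succ),
      (hN.trans (monotone_length_iterSubst_two n hRj)).trans_lt (length_iterSubst_two_lt hj)⟩

lemma exists_isAdmissible_le_length (n : ℕ → ℕ) (r N : ℕ) :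
    ∃ R ≥ r, ∃ k, IsAdmissible n R k ∧
      N ≤ (infimaxWord n R k).length := by
  by_cases hn : ∃ R, ∀ j ≥ R, n j = 0
  · obtain ⟨R, hR⟩ := hn
    refine ⟨max r R, le_max_left _ _, N,
      isAdmissible_of_forall_eq_zero (fun j hj => hR j (le_of_max_le_right hj)) N, ?_⟩
    refine N.le_succ.trans ?_
    simpa [infimaxWord] using
      length_le_length_flatMap (iterSubst_ne_nil n (max r R)) (List.replicate (N + 1) 2)
  · push Not at hn
    obtain ⟨R, hR, hN⟩ := exists_le_length_iterSubst_two hn r N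
    exact ⟨R, hR, 0, isAdmissible_zero n R, by simpa [infimaxWord] using hN⟩

lemma exists_flatMap_iterSubst_eq (n : ℕ → ℕ) {r R : ℕ} (h : r ≤ R) (w : List (Fin 3)) :
    ∃ y : List (Fin 3), w.flatMap (iterSubst n R) = y.flatMap (iterSubst n r) := by
  induction R, h using Nat.le_induction generalizing w with
  | base => exact ⟨w, rfl⟩
  | succ R _ ih => exact flatMap_iterSubst_succ n R w ▸ ih _

end Admissible

section Itinerary

open Matrix

/-- The orbit of `α` under the multidimensional continued fraction map, which applies
`renormMatrix n` with `n = ⌊a₀ / a₂⌋`. The vectors are not normalized. -/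
noncomputable def renormOrbit (α : Fin 3 → ℝ) : ℕ → Fin 3 → ℝ
  | 0 => α
  | j + 1 => renormMatrix ⌊renormOrbit α j 0 / renormOrbit α j 2⌋₊ *ᵥ renormOrbit α j

/-- The itinerary of `α` under the multidimensional continued fraction map. -/
noncomputable def itinerary (α : Fin 3 → ℝ) (j : ℕ) : ℕ :=
  ⌊renormOrbit α j 0 / renormOrbit α j 2⌋₊

lemma iterRenorm_itinerary_mulVec (α : Fin 3 → ℝ) (j : ℕ) :
    iterRenorm (itinerary α) j *ᵥ α = renormOrbit α j := by
  induction j with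
  | zero => exact one_mulVec α
  | succ j ih =>
    rw [iterRenorm_succ_mulVec, ih]
    rfl

lemma renormMatrix_floor_mulVec_mem_cone {a : Fin 3 → ℝ} (h0 : 0 ≤ a) (h2 : 0 < a 2) :
    0 ≤ renormMatrix ⌊a 0 / a 2⌋₊ *ᵥ a ∧ 0 < (renormMatrix ⌊a 0 / a 2⌋₊ *ᵥ a) 2 := by
  have hle : (⌊a 0 / a 2⌋₊ : ℝ) * a 2 ≤ a 0 :=
    (le_div_iff₀ h2).1 (Nat.floor_le (div_nonneg (h0 0) h2.le))
  have hlt : a 0 < (⌊a 0 / a 2⌋₊ + 1) * a 2 :=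
    (div_lt_iff₀ h2).1 (Nat.lt_floor_add_one _)
  rw [renormMatrix_mulVec]
  refine ⟨fun i => ?_, by simpa using hlt⟩
  fin_cases i
  · exact h0 1
  · simpa using hle
  · simpa using hlt.le

lemma renormOrbit_mem_cone {α : Fin 3 → ℝ} (h0 : 0 ≤ α) (h2 : 0 < α 2) (j : ℕ) :
    0 ≤ renormOrbit α j ∧ 0 < renormOrbit α j 2 := by
  induction j with
  | zero => exact ⟨h0, h2⟩
  | succ j ih => exact renormMatrix_floor_mulVec_mem_cone ih.1 ih.2

end Itinerary

section Infimax

open Matrix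

variable {α : Fin 3 → ℝ} {Iα : Seq3} {R k : ℕ}

lemma IsAdmissible.pos_of_mem_Delta' (hk : IsAdmissible (itinerary α) R k) (hα : α ∈ Delta') :
    0 < infimaxFunctional (itinerary α) R k ⬝ᵥ α := by
  refine hk α fun j => ?_
  rw [iterRenorm_itinerary_mulVec]
  exact (renormOrbit_mem_cone hα.1.1 hα.2 j).2

lemma exists_mem_MaxSet_hasFreq_prefixWord (hα : α ∈ Delta') (R k : ℕ) :
    ∃ w ∈ MaxSet, hasFreq w α ∧
      prefixWord w (infimaxWord (itinerary α) R k).length = infimaxWord (itinerary α) R k := by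
  obtain ⟨hcone, hcone2⟩ := renormOrbit_mem_cone hα.1.1 hα.2 R
  obtain ⟨u, hu, hdisc, hpre⟩ := exists_mem_MaxSet_hasBoundedDiscrepancy hcone hcone2 (k + 1)
  have hne := iterSubst_ne_nil (itinerary α) R
  rw [← iterRenorm_itinerary_mulVec] at hdisc
  refine ⟨substSeq (iterSubst (itinerary α) R) u, substSeq_iterSubst_mem_MaxSet _ R hu,
    (hdisc.substSeq hne (weight_iterSubst_vecMul_iterRenorm _ R)).hasFreq ?_, ?_⟩
  · rw [Fin.sum_univ_three]
    exact hα.1.2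
  · rw [infimaxWord, ← hpre]
    exact prefixWord_substSeq hne u (k + 1)

lemma infimaxWord_le_prefixWord (hk : IsAdmissible (itinerary α) R k) (hα : α ∈ Delta')
    {w : Seq3} (hw : w ∈ MaxSet) (hfreq : hasFreq w α) :
    infimaxWord (itinerary α) R k ≤
      prefixWord w (infimaxWord (itinerary α) R k).length := by
  by_contra! hlt
  refine (hk.pos_of_mem_Delta' hα).not_ge
    ((bddAboveOnWordsBelow_infimaxWord _ R k).dotProduct_nonpos hfreq.mem_DFMZ ?_)
  rintro _ rfl m
  exact (lexLe_iff_forall_prefixWord_le.1 (hw.2 m) _).trans_lt hlt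

lemma IsInfimax.prefixWord_eq_infimaxWord (hI : IsInfimax α Iα) (hα : α ∈ Delta')
    (hk : IsAdmissible (itinerary α) R k) :
    prefixWord Iα (infimaxWord (itinerary α) R k).length =
      infimaxWord (itinerary α) R k := by
  obtain ⟨-, -, hlower, hgreatest⟩ := hI
  apply le_antisymm
  · obtain ⟨w, hw, hfreq, hpre⟩ := exists_mem_MaxSet_hasFreq_prefixWord hα R k
    exact (lexLe_iff_forall_prefixWord_le.1 (hlower w ⟨hw, hfreq⟩) _).trans_eq hpre
  · have hle := lexLe_iff_forall_prefixWord_le.1 <|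
      hgreatest (extendWord 0 (infimaxWord (itinerary α) R k))
        fun w hw => extendWord_zero_lexLe (infimaxWord_le_prefixWord hk hα hw.1 hw.2)
    exact (prefixWord_extendWord _ _).symm.trans_le (hle _)

end Infimax

section OrbitClosure

open Matrix

lemma exists_prefixWord_infix_of_mem_orbitClosure {s t : Seq3} (ht : t ∈ orbitClosure s) (N : ℕ) :
    ∃ M, prefixWord t N <:+: prefixWord s M := by
  obtain ⟨_, hm, m, rfl⟩ :=
    mem_closure_iff.1 ht _ (PiNat.isOpen_cylinder _ t N) (PiNat.self_mem_cylinder t N)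
  refine ⟨m + N, ?_⟩
  rw [prefixWord_add, ← prefixWord_eq_iff.2 (PiNat.mem_cylinder_iff.1 hm)]
  exact (List.suffix_append _ _).isInfix

lemma mem_of_isClosed_of_forall_prefixWord {C : Set Seq3} (hC : IsClosed C) {s : Seq3}
    (h : ∀ N, ∃ t ∈ C, prefixWord t N = prefixWord s N) : s ∈ C := by
  rw [← hC.closure_eq, (PiNat.isTopologicalBasis_cylinders _).mem_closure_iff]
  rintro _ ⟨x, N, rfl⟩ hs
  obtain ⟨t, ht, hts⟩ := h N
  refine ⟨t, ?_, ht⟩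
  rw [← PiNat.mem_cylinder_iff_eq.1 hs, PiNat.mem_cylinder_iff]
  exact prefixWord_eq_iff.1 hts

-- A factor of the image of a word under `iterSubst n R` is, up to boundedly many letters, itself
-- such an image.
lemma iterRenorm_mulVec_nonneg {n : ℕ → ℕ} {R : ℕ} {X : Set Seq3}
    (hX : ∀ s ∈ X, ∀ N, ∃ y : List (Fin 3), prefixWord s N <:+: y.flatMap (iterSubst n R))
    {v : Fin 3 → ℝ} (hv : v ∈ DFMZ X) : 0 ≤ iterRenorm n R *ᵥ v := by
  intro i
  obtain ⟨L, hL⟩ := (Set.finite_range fun b => (iterSubst n R b).length).bddAbove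
  rw [mem_upperBounds, Set.forall_mem_range] at hL
  set l := (-Pi.single i 1) ᵥ* iterRenorm n R with hl
  suffices h : l ⬝ᵥ v ≤ 0 by
    rwa [hl, ← dotProduct_mulVec, neg_dotProduct, single_one_dotProduct, neg_nonpos] at h
  refine dotProduct_nonpos_of_mem_DFMZ hv (c := L * ‖l‖ + 0 + L * ‖l‖) fun s hs N => ?_
  obtain ⟨y, hy⟩ := hX s hs N
  obtain ⟨p, w, q, -, hp, hq, h⟩ := exists_infix_eq_append_flatMap_append hL hy
  rw [h, weight_append, weight_append, hl, weight_vecMul_iterRenorm, ← hl]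
  exact add_le_add_three ((le_abs_self _).trans (abs_weight_le_of_length_le l hp))
    (weight_nonpos (neg_nonpos.2 (Pi.single_nonneg.2 zero_le_one)) w)
    ((le_abs_self _).trans (abs_weight_le_of_length_le l hq))

lemma sum_renormMatrix_mulVec_renormMatrix_mulVec (m n : ℕ) (v : Fin 3 → ℝ) :
    ∑ i, (renormMatrix m *ᵥ (renormMatrix n *ᵥ v)) i = v 2 := by
  simp only [renormMatrix_mulVec, Fin.sum_univ_three, cons_val]
  ring

lemma iterRenorm_mulVec_two_pos {n : ℕ → ℕ} {v : Fin 3 → ℝ} (hv : v ≠ 0)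
    (h : ∀ R, 0 ≤ iterRenorm n R *ᵥ v) (R : ℕ) : 0 < (iterRenorm n R *ᵥ v) 2 := by
  rw [← sum_renormMatrix_mulVec_renormMatrix_mulVec (n (R + 1)) (n R) (iterRenorm n R *ᵥ v),
    ← iterRenorm_succ_mulVec, ← iterRenorm_succ_mulVec]
  refine (Finset.sum_nonneg fun i _ => h _ i).lt_of_ne' fun hsum => hv ?_
  refine eq_zero_of_iterRenorm_mulVec_eq_zero (n := n) (R := R + 2) (funext fun i => ?_)
  exact (Finset.sum_eq_zero_iff_of_nonneg fun i _ => h _ i).1 hsum i (Finset.mem_univ i)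

variable {α : Fin 3 → ℝ} {Iα : Seq3}

lemma IsInfimax.exists_prefixWord_infix (hI : IsInfimax α Iα) (hα : α ∈ Delta') (r : ℕ) {s : Seq3}
    (hs : s ∈ orbitClosure Iα) (N : ℕ) :
    ∃ y : List (Fin 3), prefixWord s N <:+: y.flatMap (iterSubst (itinerary α) r) := by
  obtain ⟨M, hM⟩ := exists_prefixWord_infix_of_mem_orbitClosure hs N
  obtain ⟨R, hR, k, hk, hlen⟩ := exists_isAdmissible_le_length (itinerary α) r M
  obtain ⟨y, hy⟩ := exists_flatMap_iterSubst_eq (itinerary α) hR (List.replicate (k + 1) 2)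
  refine ⟨y, hM.trans ?_⟩
  rw [← hy, ← infimaxWord, ← hI.prefixWord_eq_infimaxWord hα hk]
  exact (prefixWord_prefix Iα hlen).isInfix

lemma IsAdmissible.pos_of_mem_DFMZ {R k : ℕ} (hk : IsAdmissible (itinerary α) R k)
    (hI : IsInfimax α Iα) (hα : α ∈ Delta') {v : Fin 3 → ℝ} (hv : v ∈ DFMZ (orbitClosure Iα)) :
    0 < infimaxFunctional (itinerary α) R k ⬝ᵥ v :=
  hk v (iterRenorm_mulVec_two_pos (ne_zero_of_mem_DFMZ hv) fun r =>
    iterRenorm_mulVec_nonneg (fun _ hs => hI.exists_prefixWord_infix hα r hs) hv)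

lemma IsInfimax.mem_of_mem_DFMZ (hI : IsInfimax α Iα) (hα : α ∈ Delta') {C : Set Seq3}
    (hclosed : IsClosed C) (hmaps : Set.MapsTo shift C C) (hsub : C ⊆ BetaShift Iα)
    {v : Fin 3 → ℝ} (hvC : v ∈ DFMZ C) (hv : v ∈ DFMZ (orbitClosure Iα)) : Iα ∈ C := by
  refine mem_of_isClosed_of_forall_prefixWord hclosed fun N => ?_
  obtain ⟨R, -, k, hk, hlen⟩ := exists_isAdmissible_le_length (itinerary α) 0 N
  have hpre := hI.prefixWord_eq_infimaxWord hα hk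
  set P := infimaxWord (itinerary α) R k
  by_contra! hne
  refine (hk.pos_of_mem_DFMZ hI hα hv).not_ge
    ((bddAboveOnWordsBelow_infimaxWord _ R k).dotProduct_nonpos hvC fun s hs m => ?_)
  have hle : prefixWord (shift^[m] s) P.length ≤ prefixWord Iα P.length :=
    lexLe_iff_forall_prefixWord_le.1 (hsub hs m) _
  refine (hle.lt_of_ne fun heq => hne _ (hmaps.iterate m hs) ?_).trans_eq hpre
  rw [prefixWord_eq_iff] at heq ⊢
  exact fun i hi => heq i (hi.trans_le hlen)

end OrbitClosure

lemma IsMinimalSet.eq_closure_orbit {X : Type*} [TopologicalSpace X] [T2Space X] {f : X → X}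
    {C : Set X} (hC : IsMinimalSet f C) {x : X} (hx : x ∈ C) :
    C = closure {y | ∃ n : ℕ, f^[n] x = y} := by
  obtain ⟨-, hcompact, hmaps, hdense⟩ := hC
  refine (hdense x hx).antisymm (closure_minimal ?_ hcompact.isClosed)
  rintro _ ⟨n, rfl⟩
  exact hmaps.iterate n hx

/-- Any minimal set `C ⊆ B(I(α))` whose Misiurewicz–Ziemian digit
frequency set meets that of `C_α` equals `C_α`. -/
theorem stmt16 (α : Fin 3 → ℝ) (hα : α ∈ Delta') (Iα : Seq3) (hI : IsInfimax α Iα)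
    (C : Set Seq3) (hC : IsMinimalSet shift C) (hCsub : C ⊆ BetaShift Iα)
    (hmeet : (DFMZ C ∩ DFMZ (orbitClosure Iα)).Nonempty) :
    C = orbitClosure Iα := by
  obtain ⟨v, hvC, hv⟩ := hmeet
  exact hC.eq_closure_orbit
    (hI.mem_of_mem_DFMZ hα hC.2.1.isClosed hC.2.2.1 hCsub hvC hv)
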